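/- arXiv:2210.16658 — 2 statements merged into one kernel-verified Lean document; each statement's English description precedes it below -/
import Mathlib

section
/- For every H ∈ ℝ^{d×Kn}, the central-path loss satisfies the closed-form identity L(H) = (1/(2K)) tr( (Σ_W(H) + (λ_W/K) I_d) (Σ̃_T(H) + (λ_W/K) I_d)^{-1} ) + (λ_H/2) tr(Σ̃_T(H)) − (d − K)/(2K). -/
open Matrix Filter
open scoped BigOperators

noncomputable section

variable {K n d : ℕ}

/-- The one-hot label matrix `Y = I_K ⊗ 1_nᵀ`: columns are indexed by class/sample pairs. -/
def Ymat (K n : ℕ) : Matrix (Fin K) (Fin K × Fin n) ℝ :=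
  Matrix.of fun k p => if p.1 = k then 1 else 0

/-- Squared Frobenius norm. -/
def frobSq {m p : Type*} [Fintype m] [Fintype p] (M : Matrix m p ℝ) : ℝ :=
  ∑ i, ∑ j, (M i j) ^ 2

/-- Frobenius norm. -/
def frobNorm {m p : Type*} [Fintype m] [Fintype p] (M : Matrix m p ℝ) : ℝ :=
  Real.sqrt (frobSq M)

/-- The unconstrained-features objective `g`. -/
def g (lW lH : ℝ) (W : Matrix (Fin K) (Fin d) ℝ)
    (H : Matrix (Fin d) (Fin K × Fin n) ℝ) : ℝ :=
  (1 / (2 * (K : ℝ) * n)) * frobSq (W * H - Ymat K n) +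
    (lW / (2 * (K : ℝ))) * frobSq W + (lH / (2 * (K : ℝ) * n)) * frobSq H

/-- Class means. -/
def classMean (H : Matrix (Fin d) (Fin K × Fin n) ℝ) (k : Fin K) : Fin d → ℝ :=
  fun a => (1 / (n : ℝ)) * ∑ i, H a (k, i)

/-- Global mean. -/
def globalMean (H : Matrix (Fin d) (Fin K × Fin n) ℝ) : Fin d → ℝ :=
  fun a => (1 / ((K : ℝ) * n)) * ∑ p, H a p

/-- Matrix of class means `H̄ ∈ ℝ^{d×K}`. -/
def Hbar (H : Matrix (Fin d) (Fin K × Fin n) ℝ) : Matrix (Fin d) (Fin K) ℝ :=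
  Matrix.of fun a k => classMean H k a

/-- `H̄ ⊗ 1_nᵀ`: the matrix whose n columns of class k all equal the class mean. -/
def HbarSpread (H : Matrix (Fin d) (Fin K × Fin n) ℝ) :
    Matrix (Fin d) (Fin K × Fin n) ℝ :=
  Matrix.of fun a p => classMean H p.1 a

/-- Within-class covariance. -/
def SigmaW (H : Matrix (Fin d) (Fin K × Fin n) ℝ) : Matrix (Fin d) (Fin d) ℝ :=
  Matrix.of fun a b =>
    (1 / ((K : ℝ) * n)) * ∑ p : Fin K × Fin n,
      (H a p - classMean H p.1 a) * (H b p - classMean H p.1 b)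

/-- Between-class covariance. -/
def SigmaB (H : Matrix (Fin d) (Fin K × Fin n) ℝ) : Matrix (Fin d) (Fin d) ℝ :=
  Matrix.of fun a b =>
    (1 / (K : ℝ)) * ∑ k : Fin K,
      (classMean H k a - globalMean H a) * (classMean H k b - globalMean H b)

/-- Non-centered total covariance. -/
def SigmaTtil (H : Matrix (Fin d) (Fin K × Fin n) ℝ) : Matrix (Fin d) (Fin d) ℝ :=
  (1 / ((K : ℝ) * n)) • (H * Hᵀ)

/-- Non-centered between-class covariance. -/
def SigmaBtil (H : Matrix (Fin d) (Fin K × Fin n) ℝ) : Matrix (Fin d) (Fin d) ℝ :=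
  Matrix.of fun a b => (1 / (K : ℝ)) * ∑ k : Fin K, classMean H k a * classMean H k b

/-- The closed-form optimal last-layer weights `W*(H)`. -/
def Wstar (lW : ℝ) (H : Matrix (Fin d) (Fin K × Fin n) ℝ) :
    Matrix (Fin K) (Fin d) ℝ :=
  Ymat K n * Hᵀ * (H * Hᵀ + ((n : ℝ) * lW) • (1 : Matrix (Fin d) (Fin d) ℝ))⁻¹

/-- The central-path loss `L(H)`. -/
def Lcp (lW lH : ℝ) (H : Matrix (Fin d) (Fin K × Fin n) ℝ) : ℝ :=
  (1 / (2 * (K : ℝ) * n)) * frobSq (Wstar lW H * H - Ymat K n) +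
    (lW / (2 * (K : ℝ))) * frobSq (Wstar lW H) +
    (lH / (2 * (K : ℝ) * n)) * frobSq H

/-- `A(H) = Σ̃_T(H) + (λ_W/K) I`. -/
def Amat (lW : ℝ) (H : Matrix (Fin d) (Fin K × Fin n) ℝ) : Matrix (Fin d) (Fin d) ℝ :=
  SigmaTtil H + (lW / (K : ℝ)) • 1

/-- The gradient of the central-path loss w.r.t. the Frobenius inner product. -/
def gradL (lW lH : ℝ) (H : Matrix (Fin d) (Fin K × Fin n) ℝ) :
    Matrix (Fin d) (Fin K × Fin n) ℝ :=
  (1 / ((K : ℝ) ^ 2 * n)) •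
    ((Amat lW H)⁻¹ * (H - HbarSpread H)
      - (Amat lW H)⁻¹ * (SigmaW H + (lW / (K : ℝ)) • 1) * (Amat lW H)⁻¹ * H
      + (lH * (K : ℝ)) • H)

/-- NC1 metric. -/
def NC1til (H : Matrix (Fin d) (Fin K × Fin n) ℝ) : ℝ :=
  (SigmaW H).trace / (SigmaB H).trace

theorem frobSq_eq_trace {m p : Type*} [Fintype m] [Fintype p] (M : Matrix m p ℝ) :
    frobSq M = (M * Mᵀ).trace := by
  simp [frobSq, Matrix.trace, Matrix.mul_apply, sq]

theorem trace_Y (K n : ℕ) : (Ymat K n * (Ymat K n)ᵀ).trace = (K : ℝ) * n := by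
  simp [Ymat, Matrix.trace, Matrix.mul_apply, Fintype.sum_prod_type]

theorem YHt_apply (K n d : ℕ) (H : Matrix (Fin d) (Fin K × Fin n) ℝ) (k : Fin K) (a : Fin d) :
    (Ymat K n * Hᵀ) k a = ∑ i, H a (k, i) := by
  simp only [Ymat, Matrix.mul_apply, Fintype.sum_prod_type, Matrix.of_apply,
    Matrix.transpose_apply, ite_mul, one_mul, zero_mul]
  rw [Finset.sum_eq_single k]
  · simp
  · intro b _ hb
    simp [hb]
  · simp

theorem SigmaW_eq (K n d : ℕ) (hn : 0 < n) (H : Matrix (Fin d) (Fin K × Fin n) ℝ) :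
    SigmaW H = (1 / ((K : ℝ) * n)) •
      (H * Hᵀ - (1 / (n : ℝ)) • ((Ymat K n * Hᵀ)ᵀ * (Ymat K n * Hᵀ))) := by
  have hn' : (n : ℝ) ≠ 0 := by positivity
  ext a b
  simp only [SigmaW, Matrix.of_apply, Matrix.smul_apply, Matrix.sub_apply, smul_eq_mul]
  congr 1
  rw [Matrix.mul_apply, Matrix.mul_apply]
  simp only [Matrix.transpose_apply, YHt_apply, Fintype.sum_prod_type]
  rw [Finset.mul_sum, ← Finset.sum_sub_distrib]
  refine Finset.sum_congr rfl fun k _ => ?_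
  have e : ∀ i, (H a (k, i) - classMean H k a) * (H b (k, i) - classMean H k b)
      = H a (k, i) * H b (k, i) - classMean H k b * H a (k, i)
        - classMean H k a * H b (k, i) + classMean H k a * classMean H k b := fun i => by ring
  rw [Finset.sum_congr rfl fun i _ => e i]
  simp only [Finset.sum_add_distrib, Finset.sum_sub_distrib, ← Finset.mul_sum,
    Finset.sum_const, Finset.card_univ, Fintype.card_fin, nsmul_eq_mul, classMean]
  field_simp
  ring

/-- closed-form identity for the central-path loss:
`L(H) = (1/(2K)) tr((Σ_W + (λ_W/K)I)(Σ̃_T + (λ_W/K)I)⁻¹) + (λ_H/2) tr(Σ̃_T) − (d−K)/(2K)`. -/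
theorem central_path_loss_closed_form
    (K n d : ℕ) (hK : 0 < K) (hn : 0 < n) (hdK : K ≤ d)
    (lW lH : ℝ) (hlW : 0 < lW) (hlH : 0 ≤ lH)
    (H : Matrix (Fin d) (Fin K × Fin n) ℝ) :
    Lcp lW lH H
      = (1 / (2 * (K : ℝ))) *
          ((SigmaW H + (lW / (K : ℝ)) • (1 : Matrix (Fin d) (Fin d) ℝ)) *
            (SigmaTtil H + (lW / (K : ℝ)) • (1 : Matrix (Fin d) (Fin d) ℝ))⁻¹).trace
        + (lH / 2) * (SigmaTtil H).trace
        - ((d : ℝ) - K) / (2 * (K : ℝ)) := by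
  have hn' : (n : ℝ) ≠ 0 := by positivity
  have hK' : (K : ℝ) ≠ 0 := by positivity
  obtain ⟨M, hM⟩ : ∃ M, M = H * Hᵀ + ((n : ℝ) * lW) • (1 : Matrix (Fin d) (Fin d) ℝ) := ⟨_, rfl⟩
  obtain ⟨B, hB⟩ : ∃ B, B = Ymat K n * Hᵀ := ⟨_, rfl⟩
  have hMpd : M.PosDef := by
    rw [hM]
    refine Matrix.PosDef.posSemidef_add ?_ ?_
    · simpa using Matrix.posSemidef_self_mul_conjTranspose H
    · exact Matrix.PosDef.one.smul (by positivity)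
  have hdet : IsUnit M.det := hMpd.det_pos.ne'.isUnit
  have hMt : Mᵀ = M := by
    rw [hM]; simp
  have hMit : (M⁻¹)ᵀ = M⁻¹ := by
    rw [Matrix.transpose_nonsing_inv, hMt]
  have hBt : H * (Ymat K n)ᵀ = Bᵀ := by
    rw [hB]; simp
  have hHH : H * Hᵀ = M - ((n : ℝ) * lW) • (1 : Matrix (Fin d) (Fin d) ℝ) := by
    rw [hM]; simp
  have hW : Wstar lW H = B * M⁻¹ := by
    rw [hB, hM]; rfl
  -- the fitted term
  have h1 : frobSq (B * M⁻¹ * H - Ymat K n)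
      = (K : ℝ) * n - (B * M⁻¹ * Bᵀ).trace - (n * lW) * frobSq (B * M⁻¹) := by
    rw [frobSq_eq_trace, frobSq_eq_trace, ← trace_Y K n]
    have e1 : B * M⁻¹ * H * (B * M⁻¹ * H)ᵀ
        = B * M⁻¹ * Bᵀ - (n * lW) • (B * M⁻¹ * (B * M⁻¹)ᵀ) := by
      calc B * M⁻¹ * H * (B * M⁻¹ * H)ᵀ = B * M⁻¹ * (H * Hᵀ) * (B * M⁻¹)ᵀ := by
            rw [Matrix.transpose_mul (B * M⁻¹) H]; simp only [Matrix.mul_assoc]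
        _ = _ := by
            rw [hHH, Matrix.mul_sub, Matrix.sub_mul, Matrix.nonsing_inv_mul_cancel_right _ _ hdet,
              Matrix.transpose_mul, hMit, Matrix.mul_smul, Matrix.mul_one, Matrix.smul_mul,
              ← Matrix.mul_assoc]
    have e2 : B * M⁻¹ * H * (Ymat K n)ᵀ = B * M⁻¹ * Bᵀ := by
      rw [Matrix.mul_assoc, hBt]
    have e3 : (Ymat K n * (B * M⁻¹ * H)ᵀ).trace = (B * M⁻¹ * Bᵀ).trace := by
      rw [← Matrix.trace_transpose, Matrix.transpose_mul, Matrix.transpose_transpose, e2]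
    rw [Matrix.transpose_sub, Matrix.sub_mul, Matrix.mul_sub, Matrix.mul_sub, e1, e2]
    simp only [Matrix.trace_sub, e3, Matrix.trace_smul, smul_eq_mul]
    ring
  have hT : SigmaTtil H + (lW / (K : ℝ)) • (1 : Matrix (Fin d) (Fin d) ℝ)
      = (1 / ((K : ℝ) * n)) • M := by
    rw [SigmaTtil, hM, smul_add, smul_smul]
    congr 2
    field_simp
  have hTi : ((1 / ((K : ℝ) * n)) • M)⁻¹ = ((K : ℝ) * n) • M⁻¹ := by
    apply Matrix.inv_eq_right_inv
    rw [Matrix.smul_mul, Matrix.mul_smul, Matrix.mul_nonsing_inv _ hdet, smul_smul]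
    field_simp
    simp
  have hS : SigmaW H + (lW / (K : ℝ)) • (1 : Matrix (Fin d) (Fin d) ℝ)
      = (1 / ((K : ℝ) * n)) • (M - (1 / (n : ℝ)) • (Bᵀ * B)) := by
    rw [SigmaW_eq K n d hn H, ← hB, hHH]
    have e : lW / (K : ℝ) = (1 / ((K : ℝ) * n)) * (n * lW) := by field_simp
    rw [e, ← smul_smul (1 / ((K : ℝ) * n)), ← smul_add]
    congr 1
    abel
  have htr : (Bᵀ * B * M⁻¹).trace = (B * M⁻¹ * Bᵀ).trace := by
    rw [Matrix.mul_assoc, Matrix.trace_mul_comm]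
  have hmain : (((1 / ((K : ℝ) * n)) • (M - (1 / (n : ℝ)) • (Bᵀ * B))) *
      (((K : ℝ) * n) • M⁻¹)).trace = d - (1 / (n : ℝ)) * (B * M⁻¹ * Bᵀ).trace := by
    rw [Matrix.smul_mul, Matrix.mul_smul, smul_smul, Matrix.sub_mul,
      Matrix.mul_nonsing_inv _ hdet, Matrix.smul_mul, Matrix.trace_smul, Matrix.trace_sub,
      Matrix.trace_smul, htr, Matrix.trace_one, Fintype.card_fin, smul_eq_mul, smul_eq_mul]
    field_simp
  rw [hT, hTi, hS, hmain, Lcp, hW, h1, frobSq_eq_trace H, SigmaTtil, Matrix.trace_smul,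
    smul_eq_mul]
  field_simp
  ring

end
end

section
/- Let λ_W > 0, λ_H ≥ 0 and fix H₀ ∈ ℝ^{d×Kn}. For each β > 0 let H_{1/β} be a global minimizer of the map H ↦ L(H) + (β/(2Kn))‖H − H₀‖_F²; each such minimizer satisfies the first-order stationarity equation H_{1/β} − H₀ = −(Kn/β) ∇L(H_{1/β}), and moreover lim_{β→∞} β (H_{1/β} − H₀) = −Kn ∇L(H₀). -/
open Matrix Filter
open scoped BigOperators

noncomputable section

variable {K n d : ℕ}

/-- Frobenius inner product. -/
def frobDot {m p : Type*} [Fintype m] [Fintype p] (A B : Matrix m p ℝ) : ℝ :=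
  ∑ i, ∑ j, A i j * B i j

lemma frobDot_eq_trace {m p : Type*} [Fintype m] [Fintype p] (A B : Matrix m p ℝ) :
    frobDot A B = (A * Bᵀ).trace := by
  simp [frobDot, Matrix.trace, Matrix.mul_apply]

lemma frobDot_self {m p : Type*} [Fintype m] [Fintype p] (A : Matrix m p ℝ) :
    frobDot A A = frobSq A := by
  simp [frobDot, frobSq, pow_two]

lemma frobSq_nonneg {m p : Type*} [Fintype m] [Fintype p] (A : Matrix m p ℝ) :
    0 ≤ frobSq A :=
  Finset.sum_nonneg fun _ _ => Finset.sum_nonneg fun _ _ => sq_nonneg _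

lemma frobSq_add_smul {m p : Type*} [Fintype m] [Fintype p] (A B : Matrix m p ℝ) (t : ℝ) :
    frobSq (A + t • B) = frobSq A + 2 * t * frobDot A B + t ^ 2 * frobSq B := by
  simp only [frobSq, frobDot, Finset.mul_sum, ← Finset.sum_add_distrib]
  refine Finset.sum_congr rfl fun i _ => Finset.sum_congr rfl fun j _ => ?_
  simp only [Matrix.add_apply, Matrix.smul_apply, smul_eq_mul]
  ring

lemma sq_le_frobSq {m p : Type*} [Fintype m] [Fintype p] (A : Matrix m p ℝ) (i : m) (j : p) :
    A i j ^ 2 ≤ frobSq A := by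
  unfold frobSq
  refine le_trans ?_ (Finset.single_le_sum
    (f := fun i => ∑ j, A i j ^ 2) (fun _ _ => Finset.sum_nonneg fun _ _ => sq_nonneg _)
    (Finset.mem_univ i))
  exact Finset.single_le_sum (f := fun j => A i j ^ 2) (fun _ _ => sq_nonneg _)
    (Finset.mem_univ j)

lemma frobSq_eq_zero {m p : Type*} [Fintype m] [Fintype p] {A : Matrix m p ℝ}
    (h : frobSq A = 0) : A = 0 := by
  ext i j
  have h1 := sq_le_frobSq A i j
  rw [h] at h1
  simpa using le_antisymm h1 (sq_nonneg _)

lemma frobDot_mul_left {m p q : Type*} [Fintype m] [Fintype p] [Fintype q]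
    (A : Matrix m p ℝ) (D : Matrix m q ℝ) (H : Matrix q p ℝ) :
    frobDot A (D * H) = frobDot (A * Hᵀ) D := by
  rw [frobDot_eq_trace, frobDot_eq_trace, Matrix.transpose_mul, Matrix.mul_assoc]

lemma frobDot_mul_right {m p q : Type*} [Fintype m] [Fintype p] [Fintype q]
    (A : Matrix m p ℝ) (W : Matrix m q ℝ) (X : Matrix q p ℝ) :
    frobDot A (W * X) = frobDot (Wᵀ * A) X := by
  rw [frobDot_eq_trace, frobDot_eq_trace, Matrix.transpose_mul, ← Matrix.mul_assoc,
    Matrix.trace_mul_comm, Matrix.mul_assoc]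

lemma frobDot_add_left {m p : Type*} [Fintype m] [Fintype p] (A B C : Matrix m p ℝ) :
    frobDot (A + B) C = frobDot A C + frobDot B C := by
  simp [frobDot, add_mul, Finset.sum_add_distrib]

lemma frobDot_smul_left {m p : Type*} [Fintype m] [Fintype p] (t : ℝ) (A C : Matrix m p ℝ) :
    frobDot (t • A) C = t * frobDot A C := by
  simp [frobDot, Finset.mul_sum, mul_assoc]

lemma frobDot_zero_left {m p : Type*} [Fintype m] [Fintype p] (C : Matrix m p ℝ) :
    frobDot 0 C = 0 := by
  simp [frobDot]

lemma linear_coeff_zero {b c : ℝ} (h : ∀ t : ℝ, 0 ≤ t * b + t ^ 2 * c) : b = 0 := by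
  by_contra hb
  have hs : 0 < |c| + 1 := by positivity
  have h1 := h (-b / (|c| + 1))
  have h2 : -b / (|c| + 1) * b + (-b / (|c| + 1)) ^ 2 * c
      = b ^ 2 * (c - (|c| + 1)) / (|c| + 1) ^ 2 := by
    field_simp
    ring
  rw [h2] at h1
  have h3 : b ^ 2 * (c - (|c| + 1)) / (|c| + 1) ^ 2 < 0 := by
    apply div_neg_of_neg_of_pos _ (by positivity)
    apply mul_neg_of_pos_of_neg (by positivity)
    linarith [le_abs_self c]
  linarith

lemma det_gram_ne_zero {c : ℝ} (hc : 0 < c) (H : Matrix (Fin d) (Fin K × Fin n) ℝ) :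
    IsUnit (H * Hᵀ + c • (1 : Matrix (Fin d) (Fin d) ℝ)).det := by
  have h1 : (H * Hᵀ).PosSemidef := by
    simpa using Matrix.posSemidef_self_mul_conjTranspose H
  have h2 : (c • (1 : Matrix (Fin d) (Fin d) ℝ)).PosDef := Matrix.PosDef.one.smul hc
  have h3 := Matrix.PosDef.posSemidef_add h1 h2
  exact isUnit_iff_ne_zero.mpr h3.det_pos.ne'

lemma Amat_eq (hK : 0 < K) (hn : 0 < n) (lW : ℝ) (H : Matrix (Fin d) (Fin K × Fin n) ℝ) :
    H * Hᵀ + ((n : ℝ) * lW) • (1 : Matrix (Fin d) (Fin d) ℝ) = ((K : ℝ) * n) • Amat lW H := by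
  have hK' : (K : ℝ) ≠ 0 := by positivity
  have hn' : (n : ℝ) ≠ 0 := by positivity
  unfold Amat SigmaTtil
  rw [smul_add, smul_smul, smul_smul]
  congr 2
  · rw [mul_one_div_cancel (by positivity), one_smul]
  · field_simp

lemma Amat_isUnit (hK : 0 < K) (hn : 0 < n) {lW : ℝ} (hlW : 0 < lW)
    (H : Matrix (Fin d) (Fin K × Fin n) ℝ) : IsUnit (Amat lW H).det := by
  have h := det_gram_ne_zero (c := (n : ℝ) * lW) (by positivity) H
  rw [Amat_eq hK hn, Matrix.det_smul] at h
  exact isUnit_of_mul_isUnit_right h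

lemma gram_inv (hK : 0 < K) (hn : 0 < n) {lW : ℝ} (hlW : 0 < lW)
    (H : Matrix (Fin d) (Fin K × Fin n) ℝ) :
    (H * Hᵀ + ((n : ℝ) * lW) • (1 : Matrix (Fin d) (Fin d) ℝ))⁻¹
      = (1 / ((K : ℝ) * n)) • (Amat lW H)⁻¹ := by
  have hK' : (K : ℝ) ≠ 0 := by positivity
  have hn' : (n : ℝ) ≠ 0 := by positivity
  apply Matrix.inv_eq_right_inv
  rw [Amat_eq hK hn, Matrix.smul_mul, Matrix.mul_smul, smul_smul,
    Matrix.mul_nonsing_inv _ (Amat_isUnit hK hn hlW H), mul_one_div_cancel (by positivity),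
    one_smul]

lemma Ymat_mul_transpose (hn : 0 < n) (H : Matrix (Fin d) (Fin K × Fin n) ℝ) :
    Ymat K n * Hᵀ = (n : ℝ) • (Hbar H)ᵀ := by
  have hn' : (n : ℝ) ≠ 0 := by positivity
  ext k a
  simp only [Matrix.mul_apply, Ymat, Matrix.of_apply, Matrix.transpose_apply, Matrix.smul_apply,
    Hbar, classMean, smul_eq_mul, Fintype.sum_prod_type, ite_mul, one_mul, zero_mul]
  rw [← mul_assoc, mul_one_div_cancel hn', one_mul, Finset.sum_eq_single k]
  · simp
  · intro b _ hb
    simp [hb]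
  · simp

lemma Hbar_mul_Ymat (H : Matrix (Fin d) (Fin K × Fin n) ℝ) :
    Hbar H * Ymat K n = HbarSpread H := by
  ext a p
  simp [Matrix.mul_apply, Ymat, Hbar, HbarSpread]

lemma Hbar_mul_transpose (hK : 0 < K) (hn : 0 < n) (H : Matrix (Fin d) (Fin K × Fin n) ℝ) :
    Hbar H * (Hbar H)ᵀ = (K : ℝ) • (SigmaTtil H - SigmaW H) := by
  have hK' : (K : ℝ) ≠ 0 := by positivity
  have hn' : (n : ℝ) ≠ 0 := by positivity
  ext a b
  simp only [Matrix.mul_apply, Hbar, SigmaTtil, SigmaW, Matrix.of_apply, Matrix.transpose_apply,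
    Matrix.smul_apply, Matrix.sub_apply, smul_eq_mul]
  rw [← mul_sub, ← Finset.sum_sub_distrib, Fintype.sum_prod_type, ← mul_assoc, Finset.mul_sum]
  refine Finset.sum_congr rfl fun k _ => ?_
  have key : ∀ c, ∑ i, H c (k, i) = n * classMean H k c := by
    intro c
    unfold classMean
    field_simp
  have : ∑ i : Fin n, (H a (k, i) * H b (k, i) -
      (H a (k, i) - classMean H k a) * (H b (k, i) - classMean H k b))
      = (n : ℝ) * (classMean H k a * classMean H k b) := by
    have h1 : ∀ i : Fin n, (H a (k, i) * H b (k, i) -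
      (H a (k, i) - classMean H k a) * (H b (k, i) - classMean H k b))
      = H a (k, i) * classMean H k b + classMean H k a * H b (k, i)
        - classMean H k a * classMean H k b := fun i => by ring
    simp only [h1, Finset.sum_sub_distrib, Finset.sum_add_distrib, ← Finset.sum_mul,
      ← Finset.mul_sum, key]
    simp
    ring
  rw [this]
  field_simp

lemma Amat_transpose (lW : ℝ) (H : Matrix (Fin d) (Fin K × Fin n) ℝ) :
    (Amat lW H)ᵀ = Amat lW H := by
  simp [Amat, SigmaTtil, Matrix.transpose_add, Matrix.transpose_smul, Matrix.transpose_mul]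

lemma Wstar_eq (hK : 0 < K) (hn : 0 < n) {lW : ℝ} (hlW : 0 < lW)
    (H : Matrix (Fin d) (Fin K × Fin n) ℝ) :
    Wstar lW H = (1 / (K : ℝ)) • ((Hbar H)ᵀ * (Amat lW H)⁻¹) := by
  have hK' : (K : ℝ) ≠ 0 := by positivity
  have hn' : (n : ℝ) ≠ 0 := by positivity
  unfold Wstar
  rw [gram_inv hK hn hlW, Ymat_mul_transpose hn, Matrix.smul_mul, Matrix.mul_smul, smul_smul]
  congr 1
  field_simp

/-- The stated gradient is the partial gradient of `g` in `H` at `W*(H)`. -/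
lemma gradL_eq (hK : 0 < K) (hn : 0 < n) {lW : ℝ} (lH : ℝ) (hlW : 0 < lW)
    (H : Matrix (Fin d) (Fin K × Fin n) ℝ) :
    (Wstar lW H)ᵀ * (Wstar lW H * H - Ymat K n) + lH • H
      = ((K : ℝ) * n) • gradL lW lH H := by
  have hK' : (K : ℝ) ≠ 0 := by positivity
  have hn' : (n : ℝ) ≠ 0 := by positivity
  have hU := Amat_isUnit hK hn hlW H
  have hS : Hbar H * (Hbar H)ᵀ
      = (K : ℝ) • (Amat lW H - (SigmaW H + (lW / (K : ℝ)) • 1)) := by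
    rw [Hbar_mul_transpose hK hn]
    congr 1
    unfold Amat
    abel
  have hW := Wstar_eq hK hn hlW H
  have hWt : (Wstar lW H)ᵀ = (1 / (K : ℝ)) • ((Amat lW H)⁻¹ * Hbar H) := by
    rw [hW, Matrix.transpose_smul, Matrix.transpose_mul, Matrix.transpose_transpose,
      Matrix.transpose_nonsing_inv, Amat_transpose]
  have hQ : (Wstar lW H)ᵀ * (Wstar lW H * H) = (1 / (K : ℝ)) •
      ((Amat lW H)⁻¹ * H
        - (Amat lW H)⁻¹ * (SigmaW H + (lW / (K : ℝ)) • 1) * (Amat lW H)⁻¹ * H) := by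
    rw [hWt, hW]
    calc _ = ((1 / (K : ℝ)) * (1 / (K : ℝ))) •
          ((Amat lW H)⁻¹ * (Hbar H * (Hbar H)ᵀ) * (Amat lW H)⁻¹ * H) := by
          simp only [Matrix.smul_mul, Matrix.mul_smul, smul_smul, Matrix.mul_assoc]
      _ = _ := by
          rw [hS, Matrix.mul_smul, Matrix.smul_mul, Matrix.smul_mul, smul_smul, Matrix.mul_sub,
            Matrix.sub_mul, Matrix.sub_mul, Matrix.nonsing_inv_mul _ hU, Matrix.one_mul]
          congr 1
          field_simp
  have hL : (Wstar lW H)ᵀ * Ymat K n = (1 / (K : ℝ)) • ((Amat lW H)⁻¹ * HbarSpread H) := by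
    rw [hWt, Matrix.smul_mul, Matrix.mul_assoc, Hbar_mul_Ymat]
  have hc : (K : ℝ) * n * (1 / ((K : ℝ) ^ 2 * n)) = 1 / (K : ℝ) := by field_simp
  have hc2 : lH • H = (1 / (K : ℝ)) • ((lH * (K : ℝ)) • H) := by
    rw [smul_smul]
    congr 1
    field_simp
  rw [Matrix.mul_sub, hQ, hL, hc2]
  unfold gradL
  rw [smul_smul ((K : ℝ) * n), hc, ← smul_sub, ← smul_add, Matrix.mul_sub]
  congr 1
  abel

lemma Lcp_eq_g (lW lH : ℝ) (H : Matrix (Fin d) (Fin K × Fin n) ℝ) :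
    Lcp lW lH H = g lW lH (Wstar lW H) H := rfl

/-- `W*(H)` minimizes `g(·, H)`. -/
lemma Lcp_le_g (hK : 0 < K) (hn : 0 < n) {lW : ℝ} (lH : ℝ) (hlW : 0 < lW)
    (W : Matrix (Fin K) (Fin d) ℝ) (H : Matrix (Fin d) (Fin K × Fin n) ℝ) :
    Lcp lW lH H ≤ g lW lH W H := by
  have hK' : (0 : ℝ) < K := by positivity
  have hn' : (0 : ℝ) < n := by positivity
  rw [Lcp_eq_g]
  set V := Wstar lW H with hV
  have hnormal : (V * H - Ymat K n) * Hᵀ + ((n : ℝ) * lW) • V = 0 := by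
    have h1 : V * (H * Hᵀ + ((n : ℝ) * lW) • (1 : Matrix (Fin d) (Fin d) ℝ))
        = Ymat K n * Hᵀ := by
      rw [hV, Wstar, Matrix.mul_assoc,
        Matrix.nonsing_inv_mul _ (det_gram_ne_zero (by positivity) H), Matrix.mul_one]
    rw [Matrix.mul_add, Matrix.mul_smul, Matrix.mul_one, ← Matrix.mul_assoc] at h1
    rw [Matrix.sub_mul, ← h1]
    abel
  obtain ⟨D, rfl⟩ : ∃ D, W = V + (1 : ℝ) • D := ⟨W - V, by simp⟩
  have e1 : (V + (1 : ℝ) • D) * H - Ymat K n = (V * H - Ymat K n) + (1 : ℝ) • (D * H) := by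
    rw [Matrix.add_mul, Matrix.smul_mul]
    abel
  have h2 := congrArg (fun M => frobDot M D) hnormal
  simp only [frobDot_add_left, frobDot_smul_left, frobDot_zero_left] at h2
  unfold g
  rw [e1, frobSq_add_smul, frobSq_add_smul, frobDot_mul_left]
  have h3 := frobSq_nonneg (D * H)
  have h4 := frobSq_nonneg D
  have h5 : frobDot ((V * H - Ymat K n) * Hᵀ) D = - (n * lW * frobDot V D) := by linarith
  rw [h5]
  have h6 : 0 ≤ 1 / (2 * (K : ℝ) * n) * frobSq (D * H) := by positivity
  have h7 : 0 ≤ lW / (2 * (K : ℝ)) * frobSq D := by positivity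
  have h8 : 1 / (2 * (K : ℝ) * n) * (2 * (n * lW * frobDot V D))
      = lW / (2 * (K : ℝ)) * (2 * frobDot V D) := by field_simp
  linarith

lemma prox_stationary (hK : 0 < K) (hn : 0 < n) {lW : ℝ} (lH : ℝ) (hlW : 0 < lW)
    (H₀ H : Matrix (Fin d) (Fin K × Fin n) ℝ) {β : ℝ}
    (hmin : ∀ H' : Matrix (Fin d) (Fin K × Fin n) ℝ,
        Lcp lW lH H + (β / (2 * (K : ℝ) * n)) * frobSq (H - H₀)
          ≤ Lcp lW lH H' + (β / (2 * (K : ℝ) * n)) * frobSq (H' - H₀)) :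
    ((K : ℝ) * n) • gradL lW lH H + β • (H - H₀) = 0 := by
  have hK' : (0 : ℝ) < K := by positivity
  have hn' : (0 : ℝ) < n := by positivity
  rw [← gradL_eq hK hn lH hlW]
  set V := Wstar lW H with hV
  set G := Vᵀ * (V * H - Ymat K n) + lH • H + β • (H - H₀) with hG
  have hGG : frobSq G = frobDot (V * H - Ymat K n) (V * G) + lH * frobDot H G
      + β * frobDot (H - H₀) G := by
    rw [frobDot_mul_right, ← frobDot_smul_left, ← frobDot_smul_left, ← frobDot_add_left,
      ← frobDot_add_left, ← hG, frobDot_self]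
  clear_value G
  apply frobSq_eq_zero
  apply linear_coeff_zero (c := (frobSq (V * G) + lH * frobSq G + β * frobSq G) / 2)
  intro t
  have h1 := (hmin (H + t • G)).trans
    (add_le_add_left (Lcp_le_g hK hn lH hlW V (H + t • G)) _)
  rw [Lcp_eq_g, ← hV] at h1
  unfold g at h1
  have e1 : V * (H + t • G) - Ymat K n = (V * H - Ymat K n) + t • (V * G) := by
    rw [Matrix.mul_add, Matrix.mul_smul]
    abel
  have e2 : H + t • G - H₀ = (H - H₀) + t • G := by abel
  rw [e1, e2, frobSq_add_smul, frobSq_add_smul, frobSq_add_smul] at h1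
  have h2 : 0 ≤ 1 / ((K : ℝ) * n) * (t * (frobDot (V * H - Ymat K n) (V * G) + lH * frobDot H G
      + β * frobDot (H - H₀) G)
      + t ^ 2 * ((frobSq (V * G) + lH * frobSq G + β * frobSq G) / 2)) := by
    have e3 : 1 / ((K : ℝ) * n) = 2 * (1 / (2 * (K : ℝ) * n)) := by field_simp
    have e4 : lH / (2 * (K : ℝ) * n) = lH * (1 / (2 * (K : ℝ) * n)) := by field_simp
    have e5 : β / (2 * (K : ℝ) * n) = β * (1 / (2 * (K : ℝ) * n)) := by field_simp
    rw [e4, e5] at h1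
    rw [e3]
    linarith
  rw [← hGG] at h2
  exact nonneg_of_mul_nonneg_right h2 (by positivity)

lemma gradL_continuous (hK : 0 < K) (hn : 0 < n) {lW : ℝ} (lH : ℝ) (hlW : 0 < lW) :
    Continuous (fun H : Matrix (Fin d) (Fin K × Fin n) ℝ => gradL lW lH H) := by
  have hcm : ∀ k a, Continuous
      (fun H : Matrix (Fin d) (Fin K × Fin n) ℝ => classMean H k a) := by
    intro k a
    unfold classMean
    fun_prop
  have hA : Continuous (fun H : Matrix (Fin d) (Fin K × Fin n) ℝ => Amat lW H) := by
    unfold Amat SigmaTtil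
    fun_prop
  have hAi : Continuous (fun H : Matrix (Fin d) (Fin K × Fin n) ℝ => (Amat lW H)⁻¹) := by
    simp only [Matrix.inv_def, Ring.inverse_eq_inv']
    exact (hA.matrix_det.inv₀ fun H => (Amat_isUnit hK hn hlW H).ne_zero).smul
      hA.matrix_adjugate
  have hS : Continuous (fun H : Matrix (Fin d) (Fin K × Fin n) ℝ => HbarSpread H) := by
    unfold HbarSpread
    exact continuous_matrix fun a p => hcm p.1 a
  have hW : Continuous (fun H : Matrix (Fin d) (Fin K × Fin n) ℝ => SigmaW H) := by
    unfold SigmaW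
    refine continuous_matrix fun a b => ?_
    simp only [Matrix.of_apply]
    fun_prop
  unfold gradL
  fun_prop

lemma Lcp_nonneg {lW lH : ℝ} (hlW : 0 < lW) (hlH : 0 ≤ lH)
    (H : Matrix (Fin d) (Fin K × Fin n) ℝ) : 0 ≤ Lcp lW lH H := by
  unfold Lcp
  have h1 := frobSq_nonneg (Wstar lW H * H - Ymat K n)
  have h2 := frobSq_nonneg (Wstar lW H)
  have h3 := frobSq_nonneg H
  positivity

/-- every global minimizer `H_{1/β}` of
`H ↦ L(H) + (β/(2Kn))‖H − H₀‖_F²` satisfies the first-order stationarity equation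
`H_{1/β} − H₀ = −(Kn/β) ∇L(H_{1/β})`, and `β(H_{1/β} − H₀) → −Kn ∇L(H₀)` as `β → ∞`. -/
theorem proximal_minimizer_stationarity_and_limit
    (K n d : ℕ) (hK : 0 < K) (hn : 0 < n) (hdK : K ≤ d)
    (lW lH : ℝ) (hlW : 0 < lW) (hlH : 0 ≤ lH)
    (H₀ : Matrix (Fin d) (Fin K × Fin n) ℝ)
    (Hm : ℝ → Matrix (Fin d) (Fin K × Fin n) ℝ)
    (hmin : ∀ β : ℝ, 0 < β →
      ∀ H' : Matrix (Fin d) (Fin K × Fin n) ℝ,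
        Lcp lW lH (Hm β) + (β / (2 * (K : ℝ) * n)) * frobSq (Hm β - H₀)
          ≤ Lcp lW lH H' + (β / (2 * (K : ℝ) * n)) * frobSq (H' - H₀)) :
    (∀ β : ℝ, 0 < β →
      Hm β - H₀ = (-((K : ℝ) * n / β)) • gradL lW lH (Hm β)) ∧
    Filter.Tendsto
      (fun β => frobNorm (β • (Hm β - H₀) + ((K : ℝ) * n) • gradL lW lH H₀))
      Filter.atTop (nhds 0) := by
  have hK' : (0 : ℝ) < K := by positivity
  have hn' : (0 : ℝ) < n := by positivity
  have hst : ∀ β : ℝ, 0 < β →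
      ((K : ℝ) * n) • gradL lW lH (Hm β) + β • (Hm β - H₀) = 0 := fun β hβ =>
    prox_stationary hK hn lH hlW H₀ (Hm β) (hmin β hβ)
  refine ⟨fun β hβ => ?_, ?_⟩
  · have h1 : β • (Hm β - H₀) = -(((K : ℝ) * n) • gradL lW lH (Hm β)) :=
      eq_neg_of_add_eq_zero_right (hst β hβ)
    calc Hm β - H₀ = β⁻¹ • (β • (Hm β - H₀)) := by
          rw [smul_smul, inv_mul_cancel₀ hβ.ne', one_smul]
      _ = _ := by
          rw [h1, smul_neg, smul_smul, neg_smul]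
          congr 2
          field_simp
  · -- the minimizers converge to `H₀`
    have hbound : ∀ β : ℝ, 0 < β →
        frobSq (Hm β - H₀) ≤ (2 * (K : ℝ) * n * Lcp lW lH H₀) / β := by
      intro β hβ
      have h1 := hmin β hβ H₀
      have h2 := Lcp_nonneg hlW hlH (Hm β)
      have h3 : frobSq (H₀ - H₀) = 0 := by simp [frobSq]
      rw [h3, mul_zero, add_zero] at h1
      rw [le_div_iff₀ hβ]
      have h4 : β / (2 * (K : ℝ) * n) * frobSq (Hm β - H₀) ≤ Lcp lW lH H₀ := by linarith
      rw [div_mul_eq_mul_div, div_le_iff₀ (by positivity)] at h4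
      linarith
    have hsq : Filter.Tendsto (fun β => frobSq (Hm β - H₀)) Filter.atTop (nhds 0) := by
      refine tendsto_of_tendsto_of_tendsto_of_le_of_le' tendsto_const_nhds
        (Filter.Tendsto.const_div_atTop Filter.tendsto_id (2 * (K : ℝ) * n * Lcp lW lH H₀))
        (Filter.Eventually.of_forall fun β => frobSq_nonneg _) ?_
      filter_upwards [Filter.eventually_gt_atTop 0] with β hβ using hbound β hβ
    have hlim : Filter.Tendsto Hm Filter.atTop (nhds H₀) := by
      refine tendsto_pi_nhds.mpr fun i => tendsto_pi_nhds.mpr fun j => ?_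
      rw [tendsto_iff_norm_sub_tendsto_zero]
      have h1 : Filter.Tendsto (fun β => Real.sqrt (frobSq (Hm β - H₀))) Filter.atTop
          (nhds 0) := by
        simpa using hsq.sqrt
      refine squeeze_zero (fun β => norm_nonneg _) (fun β => ?_) h1
      rw [Real.norm_eq_abs]
      apply Real.abs_le_sqrt
      exact sq_le_frobSq (Hm β - H₀) i j
    have hcont : Continuous (fun H : Matrix (Fin d) (Fin K × Fin n) ℝ =>
        frobNorm (((K : ℝ) * n) • gradL lW lH H₀ - ((K : ℝ) * n) • gradL lW lH H)) := by
      have := gradL_continuous (d := d) hK hn lH hlW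
      unfold frobNorm frobSq
      fun_prop
    have h2 := (hcont.tendsto H₀).comp hlim
    have h3 : frobNorm (((K : ℝ) * n) • gradL lW lH H₀ - ((K : ℝ) * n) • gradL lW lH H₀) = 0 := by
      simp [frobNorm, frobSq]
    rw [h3] at h2
    refine h2.congr' ?_
    filter_upwards [Filter.eventually_gt_atTop 0] with β hβ
    have h1 : β • (Hm β - H₀) = -(((K : ℝ) * n) • gradL lW lH (Hm β)) :=
      eq_neg_of_add_eq_zero_right (hst β hβ)
    simp only [Function.comp]
    rw [h1]
    congr 1
    abel

end
end
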